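/- For every n, k ≥ 1, Ramsey's theorem for (n+1)-tuples and k colors is computably reducible to the parallelization of Ramsey's theorem for n-tuples and 2 colors: for every coloring f : [ℕ]^{n+1} → k, there is an f-computable sequence of colorings (g_i : [ℕ]^n → 2)_{i∈ℕ} such that for any sequence (H_i)_{i∈ℕ} of infinite sets with each H_i g_i-homogeneous, f ⊕ (⊕_i H_i) computes an infinite f-homogeneous set. -/

import Mathlib

namespace Paper

/-- Codes for oracle Turing machines. -/
inductive OCode : Type
  | zero | succ | left | right | oracle
  | pair (a b : OCode) | comp (a b : OCode) | prec (a b : OCode) | rfind' (a : OCode)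

/-- Evaluation of an oracle code with oracle `O`. -/
def oeval (O : ℕ → ℕ) : OCode → ℕ →. ℕ
  | .zero => pure 0
  | .succ => Nat.succ
  | .left => ↑fun n : ℕ => n.unpair.1
  | .right => ↑fun n : ℕ => n.unpair.2
  | .oracle => ↑fun n : ℕ => O n
  | .pair cf cg => fun n => Nat.pair <$> oeval O cf n <*> oeval O cg n
  | .comp cf cg => fun n => oeval O cg n >>= oeval O cf
  | .prec cf cg =>
    Nat.unpaired fun a n =>
      n.rec (oeval O cf a) fun y IH => do
        let i ← IH
        oeval O cg (Nat.pair a (Nat.pair y i))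
  | .rfind' cf =>
    Nat.unpaired fun a m =>
      (Nat.rfind fun n => (fun m => m = 0) <$> oeval O cf (Nat.pair a (n + m))).map (· + m)

/-- A numbering of oracle codes. -/
def encodeOCode : OCode → ℕ
  | .zero => 0
  | .succ => 1
  | .left => 2
  | .right => 3
  | .oracle => 4
  | .pair a b => 4 * Nat.pair (encodeOCode a) (encodeOCode b) + 5
  | .comp a b => 4 * Nat.pair (encodeOCode a) (encodeOCode b) + 6
  | .prec a b => 4 * Nat.pair (encodeOCode a) (encodeOCode b) + 7
  | .rfind' a => 4 * encodeOCode a + 8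

/-- The Turing jump of an oracle. -/
def jump (O : ℕ → ℕ) : Set ℕ :=
  { n | ∃ c : OCode, encodeOCode c = n.unpair.1 ∧ (oeval O c n.unpair.2).Dom }

/-- `f` is (total) recursive in the oracle `O`. -/
def RecIn (O : ℕ → ℕ) (f : ℕ → ℕ) : Prop :=
  ∃ c : OCode, ∀ n, oeval O c n = Part.some (f n)

/-- The all-zero (trivial, computable) oracle. -/
def zeroO : ℕ → ℕ := fun _ => 0

/-- Characteristic function of a set of naturals. -/
noncomputable def chi (A : Set ℕ) : ℕ → ℕ := A.indicator fun _ => 1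

/-- Turing join of two oracles. -/
def joinF (f g : ℕ → ℕ) : ℕ → ℕ := fun n => if n % 2 = 0 then f (n / 2) else g (n / 2)

/-- `A` is Σ⁰₁ relative to the oracle `O` (c.e. in `O`). -/
def SigmaIn (O : ℕ → ℕ) (A : Set ℕ) : Prop :=
  ∃ c : OCode, ∀ n, n ∈ A ↔ (oeval O c n).Dom

/-- The halting problem `∅′`. -/
noncomputable def emptyJump : Set ℕ := jump zeroO

end Paper

namespace Paper

/-- Oracle encoding a coloring of finite sets of naturals with `k` colors. -/
noncomputable def colOracle (k : ℕ) (f : Finset ℕ → Fin k) : ℕ → ℕ :=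
  fun m => (f ((Encodable.decode (α := Finset ℕ) m).getD ∅) : ℕ)

/-- `H` is homogeneous for the coloring `f` of `n`-element sets. -/
def Homog (n k : ℕ) (f : Finset ℕ → Fin k) (H : Set ℕ) : Prop :=
  ∃ c : Fin k, ∀ s : Finset ℕ, ↑s ⊆ H → s.card = n → f s = c

/-- Oracle encoding a countable sequence of sets. -/
noncomputable def seqOracle (H : ℕ → Set ℕ) : ℕ → ℕ :=
  fun m => chi (H m.unpair.1) m.unpair.2

end Paper

/-!
Binary codes of finite sets turn a coloring `f` of `(n + 1)`-sets with `k` colors into a function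
`X` on naturals. A `q`-type over `X` extends `X c`, in base `k`, by `q` further digits that are
iterated limits of the colors of the sets obtained from the one coded by `c` by adding larger and
larger elements. From an `n`-type an infinite set whose `(n + 1)`-subsets all have the same color is
found greedily, each new element realizing the required limits on the subsets chosen so far.

A `(q + 1)`-type is a path through a finitely branching tree of strings realized by a `q`-type, and
this tree is decidable from the `q`-type together with the set of strings it realizes. The low basis
argument provides both as a single limit of the data of the previous level, so after the level
`n - 1` the data is an `n`-fold limit of `X`. Such limits are absorbed by colorings of `n`-sets, the
elements of a set serving as the stages of the limits; hence homogeneous sets for colorings of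
`n`-sets with two colors separate pairs of `Σ₁` events over the data of the level `n - 1`, and
thereby find a path through its tree, which is an `n`-type.
-/

namespace Paper

open Filter

section RecIn

variable {O P f g : ℕ → ℕ}

theorem RecIn.oracle (O : ℕ → ℕ) : RecIn O O := ⟨.oracle, fun _ => rfl⟩

theorem RecIn.of_eq (hf : RecIn O f) (h : ∀ n, f n = g n) : RecIn O g :=
  funext h ▸ hf

theorem oeval_comp_of_eq_some {a b : OCode} {n m : ℕ} (h : oeval O b n = Part.some m) :
    oeval O (.comp a b) n = oeval O a m := by
  change (oeval O b n).bind (fun x => oeval O a x) = _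
  rw [h, Part.bind_some]

theorem RecIn.comp (hf : RecIn O f) (hg : RecIn O g) : RecIn O fun n => f (g n) := by
  obtain ⟨a, ha⟩ := hf
  obtain ⟨b, hb⟩ := hg
  exact ⟨.comp a b, fun n => by rw [oeval_comp_of_eq_some (hb n), ha]⟩

theorem RecIn.pair (hf : RecIn O f) (hg : RecIn O g) :
    RecIn O fun n => Nat.pair (f n) (g n) := by
  obtain ⟨a, ha⟩ := hf
  obtain ⟨b, hb⟩ := hg
  exact ⟨.pair a b, fun n => by simp [oeval, ha, hb, Seq.seq]⟩

theorem RecIn.prec (hf : RecIn O f) (hg : RecIn O g) :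
    RecIn O fun n => n.unpair.2.rec (f n.unpair.1)
      fun y i => g (Nat.pair n.unpair.1 (Nat.pair y i)) := by
  obtain ⟨a, ha⟩ := hf
  obtain ⟨b, hb⟩ := hg
  refine ⟨.prec a b, fun n => ?_⟩
  simp only [oeval, Nat.unpaired]
  induction n.unpair.2 with
  | zero => exact ha _
  | succ m ih =>
    change Part.bind _ _ = _
    rw [ih, Part.bind_some, hb]

theorem RecIn.of_natPrimrec (hf : Nat.Primrec f) : RecIn O f := by
  induction hf with
  | zero => exact ⟨.zero, fun _ => rfl⟩
  | succ => exact ⟨.succ, fun _ => rfl⟩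
  | left => exact ⟨.left, fun _ => rfl⟩
  | right => exact ⟨.right, fun _ => rfl⟩
  | pair _ _ ha hb => exact ha.pair hb
  | comp _ _ ha hb => exact ha.comp hb
  | prec _ _ ha hb => exact ha.prec hb

theorem RecIn.of_primrec (hf : Primrec f) : RecIn O f := .of_natPrimrec (Primrec.nat_iff.1 hf)

theorem RecIn.nat_rec (z : ℕ) (hg : RecIn O g) :
    RecIn O fun n => Nat.rec z (fun y i => g (Nat.pair y i)) n := by
  have hg' : RecIn O fun n => g n.unpair.2 :=
    hg.comp (.of_primrec (Primrec.snd.comp .unpair))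
  simpa using ((RecIn.of_primrec (Primrec.const z)).prec hg').comp
    (.of_primrec (Primrec₂.natPair.comp (Primrec.const 0) Primrec.id))

theorem RecIn.find (hg : RecIn O g) (hex : ∀ a, ∃ n, g (Nat.pair a n) = 0) :
    RecIn O fun a => Nat.find (hex a) := by
  obtain ⟨c, hc⟩ := hg
  obtain ⟨d, hd⟩ := RecIn.of_primrec (O := O)
    (Primrec₂.natPair.comp Primrec.id (Primrec.const 0))
  refine ⟨.comp (.rfind' c) d, fun a => ?_⟩
  have hrfind : (Nat.rfind fun n => (Part.some (decide (g (Nat.pair a n) = 0)) : Part Bool)) =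
      Part.some (Nat.find (hex a)) :=
    Part.eq_some_iff.2 <| Nat.mem_rfind.2
      ⟨by simp [Nat.find_spec (hex a)], fun hm => by simpa using Nat.find_min (hex a) hm⟩
  rw [oeval_comp_of_eq_some (hd a)]
  simp [oeval, Nat.unpaired, hc, hrfind]

theorem RecIn.trans (hf : RecIn P f) (hP : RecIn O P) : RecIn O f := by
  obtain ⟨d, hd⟩ := hP
  suffices h : ∀ c : OCode, ∃ c', oeval O c' = oeval P c by
    obtain ⟨c, hc⟩ := hf
    exact (h c).imp fun c' hc' n => by rw [hc', hc]
  intro c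
  induction c with
  | zero => exact ⟨.zero, rfl⟩
  | succ => exact ⟨.succ, rfl⟩
  | left => exact ⟨.left, rfl⟩
  | right => exact ⟨.right, rfl⟩
  | oracle => exact ⟨d, funext hd⟩
  | pair a b iha ihb =>
    obtain ⟨⟨a', ha⟩, ⟨b', hb⟩⟩ := And.intro iha ihb
    exact ⟨.pair a' b', by simp only [oeval, ha, hb]; rfl⟩
  | comp a b iha ihb =>
    obtain ⟨⟨a', ha⟩, ⟨b', hb⟩⟩ := And.intro iha ihb
    exact ⟨.comp a' b', by simp only [oeval, ha, hb]; rfl⟩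
  | prec a b iha ihb =>
    obtain ⟨⟨a', ha⟩, ⟨b', hb⟩⟩ := And.intro iha ihb
    exact ⟨.prec a' b', by simp only [oeval, ha, hb]; rfl⟩
  | rfind' a iha =>
    obtain ⟨a', ha⟩ := iha
    exact ⟨.rfind' a', by simp only [oeval, ha]; rfl⟩

theorem recIn_joinF_left (f g : ℕ → ℕ) : RecIn (joinF f g) f := by
  have h := (RecIn.oracle (joinF f g)).comp (.of_primrec Primrec.nat_double)
  simpa [joinF] using h

theorem recIn_joinF_right (f g : ℕ → ℕ) : RecIn (joinF f g) g := by
  have h := (RecIn.oracle (joinF f g)).comp (.of_primrec Primrec.nat_double_succ)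
  have half (n : ℕ) : (2 * n + 1) / 2 = n := by omega
  simpa [joinF, half] using h

/-- The list of the first `t` values of `y`. -/
abbrev initSeg (y : ℕ → ℕ) (t : ℕ) : List ℕ := (List.range t).map y

theorem initSeg_succ (y : ℕ → ℕ) (t : ℕ) : initSeg y (t + 1) = initSeg y t ++ [y t] := by
  simp [initSeg, List.range_succ]

theorem RecIn.encode_initSeg_of_next {y next : ℕ → ℕ} (hnext : RecIn O next)
    (hy : ∀ t, y t = next (Encodable.encode (initSeg y t))) :
    RecIn O fun t => Encodable.encode (initSeg y t) := by
  let snoc (p : ℕ) : ℕ := Encodable.encode (Denumerable.ofNat (List ℕ) p.unpair.1 ++ [p.unpair.2])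
  have hsnoc : Primrec snoc := Primrec.encode.comp (Primrec.list_concat.comp
    ((Primrec.ofNat _).comp (Primrec.fst.comp .unpair)) (Primrec.snd.comp .unpair))
  have hsnd : RecIn O fun p => p.unpair.2 := .of_primrec (Primrec.snd.comp .unpair)
  refine (((RecIn.of_primrec hsnoc).comp (hsnd.pair (hnext.comp hsnd))).nat_rec
    (Encodable.encode ([] : List ℕ))).of_eq fun t => ?_
  induction t with
  | zero => rfl
  | succ t ih =>
    simp only [snoc, Nat.unpair_pair] at ih ⊢
    rw [ih, ← hy, Denumerable.ofNat_encode, initSeg_succ]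

theorem RecIn.encode_initSeg (hf : RecIn O f) : RecIn O fun t => Encodable.encode (initSeg f t) :=
  (hf.comp (.of_primrec (Primrec.list_length.comp (Primrec.ofNat (List ℕ))))).encode_initSeg_of_next
    fun t => by simp

end RecIn

theorem initSeg_congr {x y : ℕ → ℕ} {t : ℕ} (h : ∀ m < t, x m = y m) :
    initSeg x t = initSeg y t :=
  List.map_congr_left fun m hm => h m (List.mem_range.1 hm)

theorem take_initSeg {y : ℕ → ℕ} {s t : ℕ} (h : s ≤ t) : (initSeg y t).take s = initSeg y s := by
  rw [initSeg, ← List.map_take, List.take_range, min_eq_left h]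

section TTFunctional

variable {α β γ δ : Type*} [Primcodable α] [Primcodable β] [Primcodable γ] [Primcodable δ]

/-- A truth-table functional: `F O a` is a primitive recursive function of `a` and of the first
`u a` values of the oracle `O`, for a primitive recursive use bound `u`. -/
def TTFunctional (F : (ℕ → ℕ) → α → β) : Prop :=
  ∃ (u : α → ℕ) (Φ : List ℕ → α → β),
    Primrec u ∧ Primrec₂ Φ ∧ ∀ O a, F O a = Φ (initSeg O (u a)) a

namespace TTFunctional

variable {F : (ℕ → ℕ) → α → β} {G : (ℕ → ℕ) → α → γ}

theorem of_eq {F' : (ℕ → ℕ) → α → β} (hF : TTFunctional F) (h : ∀ O a, F O a = F' O a) :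
    TTFunctional F' :=
  (funext fun O => funext (h O) : F = F') ▸ hF

theorem of_primrec {f : α → β} (hf : Primrec f) : TTFunctional fun _ => f :=
  ⟨fun _ => 0, fun _ => f, .const 0, hf.comp .snd, fun _ _ => rfl⟩

theorem query {f : α → ℕ} (hf : Primrec f) : TTFunctional fun O a => O (f a) :=
  ⟨fun a => f a + 1, fun l a => l.getD (f a) 0, Primrec.succ.comp hf,
    (Primrec.list_getD 0).comp .fst (hf.comp .snd), fun O a => by simp⟩

theorem comp {g : β → δ} (hg : Primrec g) (hF : TTFunctional F) :
    TTFunctional fun O a => g (F O a) := by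
  obtain ⟨u, Φ, hu, hΦ, h⟩ := hF
  exact ⟨u, fun l a => g (Φ l a), hu, hg.comp hΦ, fun O a => congrArg g (h O a)⟩

theorem precomp (hF : TTFunctional F) {g : δ → α} (hg : Primrec g) :
    TTFunctional fun O d => F O (g d) := by
  obtain ⟨u, Φ, hu, hΦ, h⟩ := hF
  exact ⟨fun d => u (g d), fun l d => Φ l (g d), hu.comp hg, hΦ.comp .fst (hg.comp .snd),
    fun O d => h O (g d)⟩

theorem prod (hF : TTFunctional F) (hG : TTFunctional G) :
    TTFunctional fun O a => (F O a, G O a) := by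
  obtain ⟨u, Φ, hu, hΦ, hF⟩ := hF
  obtain ⟨v, Ψ, hv, hΨ, hG⟩ := hG
  refine ⟨fun a => max (u a) (v a), fun l a => (Φ (l.take (u a)) a, Ψ (l.take (v a)) a),
    Primrec.nat_max.comp hu hv, Primrec.pair (hΦ.comp ?_ .snd) (hΨ.comp ?_ .snd), fun O a => ?_⟩
  · exact Primrec.list_take.comp (hu.comp .snd) .fst
  · exact Primrec.list_take.comp (hv.comp .snd) .fst
  · simp only [hF, hG, take_initSeg (le_max_left _ _), take_initSeg (le_max_right _ _)]

theorem comp₂ {g : β → γ → δ} (hg : Primrec₂ g) (hF : TTFunctional F) (hG : TTFunctional G) :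
    TTFunctional fun O a => g (F O a) (G O a) :=
  comp (g := fun p : β × γ => g p.1 p.2) hg (hF.prod hG)

theorem list_map {H : (ℕ → ℕ) → α × γ → β} (hH : TTFunctional H) {L : α → List γ}
    (hL : Primrec L) : TTFunctional fun O a => (L a).map fun x => H O (a, x) := by
  obtain ⟨u, Φ, hu, hΦ, h⟩ := hH
  refine ⟨fun a => ((L a).map fun x => u (a, x)).foldr max 0,
    fun l a => (L a).map fun x => Φ (l.take (u (a, x))) (a, x), ?_, ?_, fun O a => ?_⟩
  · exact Primrec.list_foldr (h := fun _ p => max p.1 p.2) (Primrec.list_map hL hu) (.const 0)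
      (Primrec.nat_max.comp (Primrec.fst.comp .snd) (Primrec.snd.comp .snd))
  · have hax : Primrec fun p : (List ℕ × α) × γ => (p.1.2, p.2) :=
      .pair (Primrec.snd.comp .fst) .snd
    exact Primrec.list_map (hL.comp .snd)
      (hΦ.comp (Primrec.list_take.comp (hu.comp hax) (Primrec.fst.comp .fst)) hax)
  · refine List.map_congr_left fun x hx => ?_
    have hle : u (a, x) ≤ ((L a).map fun x => u (a, x)).foldr max 0 :=
      List.le_max_of_le (List.mem_map_of_mem hx) le_rfl
    rw [h, take_initSeg hle]

theorem subst (hF : TTFunctional F) {N : (ℕ → ℕ) → α × ℕ → ℕ} (hN : TTFunctional N) :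
    TTFunctional fun O a => F (fun m => N O (a, m)) a := by
  obtain ⟨u, Φ, hu, hΦ, h⟩ := hF
  exact (comp₂ hΦ (hN.list_map (Primrec.list_range.comp hu)) (of_primrec .id)).of_eq
    fun O a => (h _ a).symm

theorem eventually_eq (hF : TTFunctional F) {E : ℕ → ℕ → ℕ} {D : ℕ → ℕ}
    (hE : ∀ m, ∀ᶠ t in atTop, E t m = D m) (a : α) : ∀ᶠ t in atTop, F (E t) a = F D a := by
  obtain ⟨u, Φ, -, -, h⟩ := hF
  filter_upwards [(Finset.range (u a)).eventually_all.2 fun m _ => hE m] with t ht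
  rw [h, h, initSeg_congr fun m hm => ht m (Finset.mem_range.2 hm)]

theorem recIn {F : (ℕ → ℕ) → ℕ → ℕ} (hF : TTFunctional F) {O X : ℕ → ℕ} (hX : RecIn O X) :
    RecIn O (F X) := by
  obtain ⟨u, Φ, hu, hΦ, h⟩ := hF
  have hΦ' : Primrec fun p : ℕ => Φ (Denumerable.ofNat (List ℕ) p.unpair.1) p.unpair.2 :=
    hΦ.comp ((Primrec.ofNat _).comp (Primrec.fst.comp .unpair)) (Primrec.snd.comp .unpair)
  have hseg : RecIn O fun a => Encodable.encode (initSeg X (u a)) :=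
    hX.encode_initSeg.comp (.of_primrec hu)
  simpa [← h] using (RecIn.of_primrec hΦ').comp (hseg.pair (.of_primrec Primrec.id))

end TTFunctional

/-- A predicate decided by a truth-table functional. -/
def TTPred (P : (ℕ → ℕ) → α → Prop) : Prop :=
  ∃ b : (ℕ → ℕ) → α → Bool, TTFunctional b ∧ ∀ O a, b O a = true ↔ P O a

namespace TTPred

variable {P Q : (ℕ → ℕ) → α → Prop} {F : (ℕ → ℕ) → α → β} {G : (ℕ → ℕ) → α → γ}
  {R : (ℕ → ℕ) → α × γ → Prop} {L : α → List γ}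

theorem of_iff (hP : TTPred P) (h : ∀ O a, P O a ↔ Q O a) : TTPred Q :=
  (funext fun O => funext fun a => propext (h O a) : P = Q) ▸ hP

theorem of_primrecPred {p : α → Prop} (hp : PrimrecPred p) : TTPred fun _ => p := by
  obtain ⟨_, hp⟩ := hp
  exact ⟨_, .of_primrec hp, fun _ _ => decide_eq_true_iff⟩

theorem rel {r : β → γ → Prop} (hr : PrimrecRel r) (hF : TTFunctional F) (hG : TTFunctional G) :
    TTPred fun O a => r (F O a) (G O a) := by
  obtain ⟨_, hr⟩ := hr
  exact ⟨_, .comp (g := fun p : β × γ => decide (r p.1 p.2)) hr (hF.prod hG),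
    fun _ _ => decide_eq_true_iff⟩

theorem eq {F' : (ℕ → ℕ) → α → β} (hF : TTFunctional F) (hF' : TTFunctional F') :
    TTPred fun O a => F O a = F' O a :=
  rel Primrec.eq hF hF'

theorem precomp (hP : TTPred P) {g : δ → α} (hg : Primrec g) : TTPred fun O d => P O (g d) := by
  obtain ⟨b, hb, h⟩ := hP
  exact ⟨_, hb.precomp hg, fun O d => h O (g d)⟩

theorem subst (hP : TTPred P) {N : (ℕ → ℕ) → α × ℕ → ℕ} (hN : TTFunctional N) :
    TTPred fun O a => P (fun m => N O (a, m)) a := by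
  obtain ⟨b, hb, h⟩ := hP
  exact ⟨_, hb.subst hN, fun O a => h _ a⟩

theorem not (hP : TTPred P) : TTPred fun O a => ¬P O a := by
  obtain ⟨b, hb, h⟩ := hP
  exact ⟨_, .comp Primrec.not hb, fun O a => by simp [← h]⟩

theorem and (hP : TTPred P) (hQ : TTPred Q) : TTPred fun O a => P O a ∧ Q O a := by
  obtain ⟨b, hb, h⟩ := hP
  obtain ⟨c, hc, h'⟩ := hQ
  exact ⟨_, .comp₂ Primrec.and hb hc, fun O a => by simp [← h, ← h']⟩

theorem imp (hP : TTPred P) (hQ : TTPred Q) : TTPred fun O a => P O a → Q O a :=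
  (hP.and hQ.not).not.of_iff fun _ _ => by tauto

open scoped Classical in
theorem list_find? (hR : TTPred R) (hL : Primrec L) :
    TTFunctional fun O a => (L a).find? fun x => decide (R O (a, x)) := by
  obtain ⟨b, hb, h⟩ := hR
  have hidx : Primrec fun l : List Bool => l.findIdx id := Primrec.list_findIdx .id .snd
  refine (TTFunctional.comp₂ Primrec.list_getElem? (.of_primrec hL)
    (TTFunctional.comp hidx (hb.list_map hL))).of_eq fun O a => ?_
  simp [List.findIdx_map, ← h, List.find?_eq_getElem?_findIdx]

theorem exists_mem_list (hR : TTPred R) (hL : Primrec L) :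
    TTPred fun O a => ∃ x ∈ L a, R O (a, x) := by
  classical
  have hsome : Primrec (Option.isSome : Option γ → Bool) := Primrec.option_isSome
  refine (eq (TTFunctional.comp hsome (hR.list_find? hL)) (.of_primrec (.const true))).of_iff
    fun O a => ?_
  simp [List.find?_isSome]

theorem forall_mem_list (hR : TTPred R) (hL : Primrec L) :
    TTPred fun O a => ∀ x ∈ L a, R O (a, x) :=
  (hR.not.exists_mem_list hL).not.of_iff fun _ _ => by simp

section Bounded

variable {R : (ℕ → ℕ) → α × ℕ → Prop} {b : α → ℕ}

theorem exists_lt (hR : TTPred R) (hb : Primrec b) : TTPred fun O a => ∃ x < b a, R O (a, x) :=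
  (hR.exists_mem_list (Primrec.list_range.comp hb)).of_iff fun _ _ => by simp

theorem forall_lt (hR : TTPred R) (hb : Primrec b) : TTPred fun O a => ∀ x < b a, R O (a, x) :=
  (hR.forall_mem_list (Primrec.list_range.comp hb)).of_iff fun _ _ => by simp

end Bounded

theorem ite [∀ O a, Decidable (P O a)] {F' : (ℕ → ℕ) → α → β} (hP : TTPred P)
    (hF : TTFunctional F) (hF' : TTFunctional F') :
    TTFunctional fun O a => if P O a then F O a else F' O a := by
  obtain ⟨b, hb, h⟩ := hP
  have hcond : Primrec fun p : Bool × β × β => cond p.1 p.2.1 p.2.2 :=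
    .cond .fst (Primrec.fst.comp .snd) (Primrec.snd.comp .snd)
  refine (TTFunctional.comp hcond (hb.prod (hF.prod hF'))).of_eq fun O a => ?_
  simp [Bool.cond_eq_ite, h]

theorem eventually_iff (hP : TTPred P) {E : ℕ → ℕ → ℕ} {D : ℕ → ℕ}
    (hE : ∀ m, ∀ᶠ t in atTop, E t m = D m) (a : α) : ∀ᶠ t in atTop, (P (E t) a ↔ P D a) := by
  obtain ⟨b, hb, h⟩ := hP
  filter_upwards [hb.eventually_eq hE a] with t ht
  rw [← h, ← h, ht]

theorem exists_recIn_choice {P : (ℕ → ℕ) → ℕ × ℕ → Prop} (hP : TTPred P) {O : ℕ → ℕ}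
    (hex : ∀ a, ∃ n, P O (a, n)) : ∃ v, RecIn O v ∧ ∀ a, P O (a, v a) := by
  classical
  let g (O : ℕ → ℕ) (p : ℕ) : ℕ := if P O p.unpair then 0 else 1
  have hg : TTFunctional g := (hP.precomp .unpair).ite (.of_primrec (.const 0))
    (.of_primrec (.const 1))
  have hg0 (a n : ℕ) : g O (Nat.pair a n) = 0 ↔ P O (a, n) := by simp [g]
  have hex' (a : ℕ) : ∃ n, g O (Nat.pair a n) = 0 := (hex a).imp fun n => (hg0 a n).2
  exact ⟨_, (hg.recIn (.oracle O)).find hex', fun a => (hg0 a _).1 (Nat.find_spec (hex' a))⟩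

end TTPred

end TTFunctional

section Strings

/-- The strings of length `t` over the alphabet `{0, …, M - 1}`, in lexicographic order. -/
def strings (M : ℕ) : ℕ → List (List ℕ)
  | 0 => [[]]
  | t + 1 => (strings M t).flatMap fun w => (List.range M).map fun a => w ++ [a]

theorem mem_strings {M t : ℕ} {w : List ℕ} :
    w ∈ strings M t ↔ w.length = t ∧ ∀ a ∈ w, a < M := by
  induction t generalizing w with
  | zero => simp +contextual [strings]
  | succ t ih =>
    rcases List.eq_nil_or_concat' w with rfl | ⟨v, b, rfl⟩
    · simp [strings]
    · simp [strings, ih, or_imp, forall_and, and_assoc]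

theorem primrec_strings (M : ℕ) : Primrec (strings M) := by
  have hstep : Primrec fun p : ℕ × List (List ℕ) =>
      p.2.flatMap fun w => (List.range M).map fun a => w ++ [a] :=
    Primrec.list_flatMap .snd <| Primrec.list_map (.const _) <|
      Primrec.list_concat.comp (Primrec.snd.comp .fst) .snd
  refine (Primrec.nat_rec₁ [[]] hstep.to₂).of_eq fun t => ?_
  induction t with
  | zero => rfl
  | succ t ih => simp only [← ih, strings]

/-- A prefix-closed set of strings containing strings over `{0, …, M - 1}` of every length. -/
structure IsInfiniteTree (M : ℕ) (T : List ℕ → Prop) : Prop where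
  of_prefix : ∀ ⦃u v : List ℕ⦄, u <+: v → T v → T u
  exists_mem : ∀ t, ∃ u ∈ strings M t, T u

/-- The string `w` has an extension by `t` letters from `{0, …, M - 1}` in `T`. -/
def HasExtension (M : ℕ) (T : List ℕ → Prop) (w : List ℕ) (t : ℕ) : Prop :=
  ∃ u ∈ strings M t, T (w ++ u)

/-- The string `w` has arbitrarily long extensions by letters from `{0, …, M - 1}` in `T`. -/
def Extendible (M : ℕ) (T : List ℕ → Prop) (w : List ℕ) : Prop :=
  ∀ t, HasExtension M T w t

variable {M : ℕ} {T : List ℕ → Prop} {w : List ℕ} {y : ℕ → ℕ}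

theorem HasExtension.anti (hT : IsInfiniteTree M T) {s t : ℕ} (hst : s ≤ t)
    (h : HasExtension M T w t) : HasExtension M T w s := by
  obtain ⟨u, hu, hTu⟩ := h
  rw [mem_strings] at hu
  refine ⟨u.take s, mem_strings.2 ⟨by simp [hu.1, hst], ?_⟩,
    hT.of_prefix ((List.prefix_append_right_inj w).2 (List.take_prefix s u)) hTu⟩
  exact fun a ha => hu.2 a (List.mem_of_mem_take ha)

theorem Extendible.mem (h : Extendible M T w) : T w := by
  obtain ⟨u, hu, hTu⟩ := h 0
  simpa [List.length_eq_zero_iff.1 (mem_strings.1 hu).1] using hTu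

theorem Extendible.of_append_singleton (hT : IsInfiniteTree M T) {a : ℕ} (ha : a < M)
    (h : Extendible M T (w ++ [a])) : Extendible M T w := by
  intro t
  obtain ⟨u, hu, hTu⟩ := h t
  rw [mem_strings] at hu
  refine HasExtension.anti hT t.le_succ ⟨a :: u, ?_, by simpa using hTu⟩
  exact mem_strings.2 ⟨by simp [hu.1], by simpa using ⟨ha, hu.2⟩⟩

theorem Extendible.exists_append_singleton (hT : IsInfiniteTree M T) (h : Extendible M T w) :
    ∃ a < M, Extendible M T (w ++ [a]) := by
  by_contra! hno
  simp only [Extendible, not_forall] at hno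
  choose! d hd using hno
  obtain ⟨_ | ⟨a, u⟩, hu, hTu⟩ := h ((Finset.range M).sup d + 1)
  · simp [mem_strings] at hu
  · simp only [mem_strings, List.length_cons, add_left_inj, List.mem_cons, forall_eq_or_imp] at hu
    exact hd a hu.2.1 <| HasExtension.anti hT (Finset.le_sup (Finset.mem_range.2 hu.2.1))
      ⟨u, mem_strings.2 ⟨hu.1, hu.2.2⟩, by simpa using hTu⟩

theorem extendible_initSeg (hy : ∀ t, T (initSeg y t)) (hM : ∀ m, y m < M) (m : ℕ) :
    Extendible M T (initSeg y m) := by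
  refine fun t => ⟨initSeg (fun i => y (m + i)) t, mem_strings.2 ⟨by simp, by simp [hM]⟩, ?_⟩
  convert hy (m + t) using 1
  simp [initSeg, List.range_add, Function.comp_def]

theorem eventually_hasExtension_iff (hT : IsInfiniteTree M T) (w : List ℕ) :
    ∀ᶠ t in atTop, (HasExtension M T w t ↔ Extendible M T w) := by
  by_cases h : Extendible M T w
  · exact .of_forall fun t => iff_of_true (h t) h
  · obtain ⟨s, hs⟩ := not_forall.1 h
    filter_upwards [eventually_ge_atTop s] with t ht
    exact iff_of_false (fun h' => hs (h'.anti hT ht)) h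

theorem exists_forall_eq_initSeg (next : List ℕ → ℕ) :
    ∃ y : ℕ → ℕ, ∀ m, y m = next (initSeg y m) := by
  let w (m : ℕ) : List ℕ := m.rec [] fun _ v => v ++ [next v]
  have hw (m : ℕ) : initSeg (fun i => next (w i)) m = w m := by
    induction m with
    | zero => rfl
    | succ m ih => rw [initSeg_succ, ih]
  exact ⟨fun i => next (w i), fun m => by rw [hw]⟩

end Strings

section Leftmost

theorem find?_flatMap_eq_bind {α β : Type*} {f : α → List β} {p : β → Bool} {q : α → Bool}
    (l : List α) (h : ∀ a ∈ l, q a = (f a).any p) :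
    (l.flatMap f).find? p = (l.find? q).bind fun a => (f a).find? p := by
  induction l with
  | nil => rfl
  | cons a l ih =>
    have ih := ih fun b hb => h b (List.mem_cons_of_mem a hb)
    have ha := h a List.mem_cons_self
    cases hq : q a with
    | false =>
      have hnone : (f a).find? p = none := List.find?_eq_none.2 (by simpa [hq] using ha)
      simp [hq, hnone, ih]
    | true =>
      have hsome : ((f a).find? p).isSome := List.find?_isSome.2 (by simpa [hq] using ha)
      obtain ⟨b, hb⟩ := Option.isSome_iff_exists.1 hsome
      simp [hq, hb]

variable {M : ℕ} {T : List ℕ → Prop}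

open scoped Classical in
theorem IsInfiniteTree.exists_leftmost (hT : IsInfiniteTree M T) :
    ∃ z : ℕ → ℕ, (∀ m, (strings M m).find? (Extendible M T) = some (initSeg z m)) ∧
      ∀ m a, Extendible M T (initSeg z m ++ [a]) → z m ≤ a := by
  obtain ⟨z, hz⟩ := exists_forall_eq_initSeg fun w => sInf {a | Extendible M T (w ++ [a])}
  have hmin (m a : ℕ) (ha : Extendible M T (initSeg z m ++ [a])) : z m ≤ a := by
    rw [hz]
    exact Nat.sInf_le ha
  refine ⟨z, fun m => ?_, hmin⟩
  induction m with
  | zero =>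
    have hnil : Extendible M T [] := by simpa [Extendible, HasExtension] using hT.exists_mem
    simp [strings, hnil]
  | succ m ih =>
    have hm : Extendible M T (initSeg z m) := by simpa using List.find?_some ih
    obtain ⟨a, haM, ha⟩ := hm.exists_append_singleton hT
    have hzm : Extendible M T (initSeg z m ++ [z m]) := by
      rw [hz]
      exact Nat.sInf_mem (s := {a | Extendible M T (initSeg z m ++ [a])}) ⟨a, ha⟩
    have hnext : (List.range M).find? (fun a => Extendible M T (initSeg z m ++ [a])) =
        some (z m) := by
      rw [List.find?_range_eq_some]
      exact ⟨by simpa using hzm, List.mem_range.2 ((hmin m a ha).trans_lt haM),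
        fun j hj => by simpa using fun h => (hmin m j h).not_gt hj⟩
    rw [strings, find?_flatMap_eq_bind (q := fun w => Extendible M T w), ih, Option.bind_some,
      List.find?_map, Function.comp_def, hnext, Option.map_some, initSeg_succ]
    intro w _
    rw [Bool.eq_iff_iff]
    simp only [List.any_map, List.any_eq_true, decide_eq_true_eq, Function.comp_apply,
      List.mem_range]
    exact ⟨fun h => h.exists_append_singleton hT, fun ⟨a, ha, h⟩ => h.of_append_singleton hT ha⟩

end Leftmost

section LowBasis

/-- Oracles `D` obtained from `E` as the pointwise limit of a truth-table computable sequence;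
the truth-table reductions replace the jump of `E`. -/
def LimitComputable (E D : ℕ → ℕ) : Prop :=
  ∃ L : (ℕ → ℕ) → ℕ × ℕ → ℕ, TTFunctional L ∧ ∀ m, ∀ᶠ t in atTop, L E (t, m) = D m

theorem TTPred.hasExtension {T : (ℕ → ℕ) → List ℕ → Prop} (hT : TTPred T) (M : ℕ) :
    TTPred fun O (p : List ℕ × ℕ) => HasExtension M (T O) p.1 p.2 :=
  (hT.precomp (Primrec.list_append.comp (Primrec.fst.comp .fst) .snd)).exists_mem_list
    ((primrec_strings M).comp .snd)

theorem exists_leftmost_limitComputable {T : (ℕ → ℕ) → List ℕ → Prop} (hT : TTPred T) {M : ℕ}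
    {E : ℕ → ℕ} (hE : IsInfiniteTree M (T E)) :
    ∃ z, LimitComputable E z ∧ (∀ m, z m < M) ∧ (∀ m, T E (initSeg z m)) ∧
      ∀ y : ℕ → ℕ, (∀ m, T E (initSeg y m)) → (∀ m, y m < M) →
        ∀ m, (∀ i < m, y i = z i) → z m ≤ y m := by
  classical
  obtain ⟨z, hz, hmin⟩ := hE.exists_leftmost
  let first (O : ℕ → ℕ) (p : ℕ × ℕ) : Option (List ℕ) :=
    (strings M (p.2 + 1)).find? fun w => HasExtension M (T O) w p.1
  have hfirst : TTFunctional first :=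
    ((hT.hasExtension M).precomp (.pair .snd (Primrec.fst.comp .fst))).list_find?
      ((primrec_strings M).comp (Primrec.succ.comp .snd))
  refine ⟨z, ⟨fun O p => ((first O p).getD []).getD p.2 0, ?_, fun m => ?_⟩, fun m => ?_,
    fun m => Extendible.mem (by simpa using List.find?_some (hz m)),
    fun y hy hyM m hyz => hmin m (y m) ?_⟩
  · exact .comp₂ (g := fun (l : List ℕ) n => l.getD n 0) (Primrec.list_getD 0)
      (.comp₂ Primrec.option_getD hfirst (.of_primrec (.const []))) (.of_primrec .snd)
  · filter_upwards [(strings M (m + 1)).toFinset.eventually_all.2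
      fun w _ => eventually_hasExtension_iff hE w] with t ht
    have hfirst_t : first E (t, m) = (strings M (m + 1)).find? (Extendible M (T E)) :=
      List.find?_congr fun w hw => by simp [ht w (List.mem_toFinset.2 hw)]
    simp [hfirst_t, hz]
  · exact (mem_strings.1 (List.mem_of_find?_eq_some (hz (m + 1)))).2 _ (by simp [initSeg_succ])
  · rw [← initSeg_congr hyz, ← initSeg_succ]
    exact extendible_initSeg hy hyM _

/-- The strings `τ` whose letters `2 v + b` spell a string of `T` with letters `v`, where the bit
`b = 0` in position `e` is a guess that the event `R e` does not happen. -/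
def guessTree (T : List ℕ → Prop) (R : ℕ → List ℕ → Prop) (τ : List ℕ) : Prop :=
  T (τ.map (· / 2)) ∧ ∀ e < τ.length, τ.getD e 0 % 2 = 0 → ¬R e (τ.map (· / 2))

theorem IsInfiniteTree.guessTree {M : ℕ} {T : List ℕ → Prop} (hT : IsInfiniteTree M T)
    {R : ℕ → List ℕ → Prop} (hR : ∀ e ⦃u v⦄, u <+: v → R e u → R e v) :
    IsInfiniteTree (2 * M) (guessTree T R) where
  of_prefix u v huv hv := by
    refine ⟨hT.of_prefix (huv.map _) hv.1, fun e he heven hRe => ?_⟩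
    have hget : v.getD e 0 = u.getD e 0 := by
      obtain ⟨w, rfl⟩ := huv
      exact List.getD_append _ _ _ _ he
    exact hv.2 e (he.trans_le huv.length_le) (hget ▸ heven) (hR e (huv.map _) hRe)
  exists_mem t := by
    obtain ⟨u, hu, hTu⟩ := hT.exists_mem t
    rw [mem_strings] at hu
    have hhalf : (u.map (2 * · + 1)).map (· / 2) = u := by
      have hcomp : (· / 2) ∘ (2 * · + 1) = (id : ℕ → ℕ) := by
        funext a; simp only [Function.comp_apply, id_eq]; omega
      rw [List.map_map, hcomp, List.map_id]
    refine ⟨u.map (2 * · + 1), mem_strings.2 ⟨by simpa using hu.1, ?_⟩, by rwa [hhalf], ?_⟩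
    · simp only [List.mem_map, forall_exists_index, and_imp, forall_apply_eq_imp_iff₂]
      exact fun a ha => by have := hu.2 a ha; omega
    · intro e he heven
      rw [List.getD_eq_getElem _ _ he] at heven
      simp at heven

theorem TTPred.guessTree {T : (ℕ → ℕ) → List ℕ → Prop} (hT : TTPred T) {R : ℕ → List ℕ → Prop}
    (hR : PrimrecRel R) : TTPred fun O => guessTree (T O) R := by
  have hhalf : Primrec fun τ : List ℕ => τ.map (· / 2) :=
    Primrec.list_map .id (Primrec.nat_div2.comp .snd).to₂
  have heven : PrimrecPred fun p : List ℕ × ℕ => p.1.getD p.2 0 % 2 = 0 :=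
    Primrec.eq.comp (Primrec.nat_mod.comp (Primrec.list_getD 0) (.const 2)) (.const 0)
  have hR' : PrimrecPred fun p : List ℕ × ℕ => R p.2 (p.1.map (· / 2)) :=
    hR.comp .snd (hhalf.comp .fst)
  exact (hT.precomp hhalf).and
    ((imp (of_primrecPred heven) (of_primrecPred hR'.not)).forall_lt Primrec.list_length)

theorem map_div_two_initSeg (y : ℕ → ℕ) (m : ℕ) :
    (initSeg y m).map (· / 2) = initSeg (y · / 2) m :=
  List.map_map

theorem guessTree_initSeg_update {T : List ℕ → Prop} {R : ℕ → List ℕ → Prop} {y : ℕ → ℕ} {e : ℕ}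
    (hodd : y e % 2 = 1) (hy : ∀ m, guessTree T R (initSeg y m))
    (hno : ∀ m, ¬R e (initSeg (y · / 2) m)) (m : ℕ) :
    guessTree T R (initSeg (Function.update y e (y e - 1)) m) := by
  have hhalf : (Function.update y e (y e - 1) · / 2) = (y · / 2) := by
    funext i
    by_cases hi : i = e
    · subst hi; simp only [Function.update_self]; omega
    · simp [hi]
  unfold guessTree
  rw [map_div_two_initSeg, hhalf, ← map_div_two_initSeg]
  refine ⟨(hy m).1, fun i hi heven => ?_⟩
  by_cases hie : i = e
  · rw [hie, map_div_two_initSeg]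
    exact hno m
  · have him : i < m := by simpa using hi
    exact (hy m).2 i (by simpa using him) (by simpa [hie, him] using heven)

/-- The low basis theorem. In the leftmost path of the guess tree every guess is correct, since a
wrong guess `1` could be lowered to `0`. -/
theorem exists_low_path {T : (ℕ → ℕ) → List ℕ → Prop} (hT : TTPred T) {M : ℕ} {E : ℕ → ℕ}
    (hE : IsInfiniteTree M (T E)) {R : ℕ → List ℕ → Prop} (hR : PrimrecRel R)
    (hmono : ∀ e ⦃u v⦄, u <+: v → R e u → R e v) :
    ∃ D, LimitComputable E D ∧ (∀ m, T E (initSeg (D · / 2) m)) ∧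
      ∀ e, D e % 2 = 1 ↔ ∃ m, R e (initSeg (D · / 2) m) := by
  obtain ⟨D, hlim, hlt, hpath, hmin⟩ :=
    exists_leftmost_limitComputable (hT.guessTree hR) (hE.guessTree hmono)
  refine ⟨D, hlim, fun m => map_div_two_initSeg D m ▸ (hpath m).1,
    fun e => ⟨fun hodd => ?_, fun ⟨m, hm⟩ => ?_⟩⟩
  · by_contra! hno
    have hlower : Function.update D e (D e - 1) e < D e := by
      rw [Function.update_self]; omega
    have hlt' (m : ℕ) : Function.update D e (D e - 1) m < 2 * M := by
      by_cases hm : m = e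
      · exact hm ▸ hlower.trans (hlt e)
      · simpa [hm] using hlt m
    exact hlower.not_ge (hmin _ (guessTree_initSeg_update hodd hpath hno) hlt' e
      fun i hi => by simp [hi.ne])
  · by_contra heven
    refine (hpath (max m (e + 1))).2 e (by simp) ?_ (hmono e ?_ hm)
    · simpa using heven
    · rw [map_div_two_initSeg, ← take_initSeg (le_max_left m (e + 1))]
      exact List.take_prefix _ _

end LowBasis

section FinsetCode

/-- The binary code of a finite set of naturals. -/
def finsetCode (s : Finset ℕ) : ℕ := ∑ i ∈ s, 2 ^ i

theorem finsetCode_insert {s : Finset ℕ} {t : ℕ} (h : t ∉ s) :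
    finsetCode (insert t s) = finsetCode s + 2 ^ t := by
  rw [finsetCode, Finset.sum_insert h, add_comm, finsetCode]

theorem finsetCode_singleton (t : ℕ) : finsetCode {t} = 2 ^ t := Finset.sum_singleton _ _

theorem finsetCode_lt {s : Finset ℕ} {t : ℕ} (h : ∀ i ∈ s, i < t) : finsetCode s < 2 ^ t :=
  Nat.geomSum_lt le_rfl h

theorem log_finsetCode_add {s : Finset ℕ} {t : ℕ} (h : ∀ i ∈ s, i < t) :
    Nat.log 2 (finsetCode s + 2 ^ t) = t := by
  have := finsetCode_lt h
  exact (Nat.log_eq_iff (by simp)).2 ⟨by omega, by rw [pow_succ]; omega⟩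

theorem primrec_two_pow : Primrec fun t : ℕ => 2 ^ t :=
  (Primrec₂.unpaired'.1 Nat.Primrec.pow).comp (.const 2) .id

theorem primrec_log_two : Primrec (Nat.log 2) := by
  have hle : PrimrecRel fun n t : ℕ => 2 ^ t ≤ n :=
    Primrec.nat_le.comp (primrec_two_pow.comp .snd) .fst
  refine (Primrec.nat_findGreatest .id hle).of_eq fun n => ?_
  refine (Nat.findGreatest_eq_iff.2 ⟨Nat.log_le_self 2 n, fun h => ?_, fun t ht _ => ?_⟩)
  · exact Nat.pow_log_le_self 2 fun hn => h (by simp [hn])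
  · exact (Nat.lt_pow_of_log_lt one_lt_two ht).not_ge

end FinsetCode

section Colorings

/-- All `n`-element subsets of `H` have the color `c`. -/
def HasColor {β : Type*} (n : ℕ) (g : Finset ℕ → β) (H : Set ℕ) (c : β) : Prop :=
  ∀ s : Finset ℕ, ↑s ⊆ H → s.card = n → g s = c

/-- `D` is obtained from `X` by taking `r` limits in succession. -/
inductive IteratedLimit (X : ℕ → ℕ) : ℕ → (ℕ → ℕ) → Prop
  | zero : IteratedLimit X 0 X
  | succ {r : ℕ} {E D : ℕ → ℕ} : IteratedLimit X r E → LimitComputable E D →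
      IteratedLimit X (r + 1) D

variable {α β : Type*} [Primcodable α] [Primcodable β] {X D : ℕ → ℕ}

/-- The largest element of a set serves as the stage at which a limit is evaluated, so each limit
costs one more element. -/
theorem IteratedLimit.exists_hasColor_imp {r : ℕ} (hD : IteratedLimit X r D)
    {ψ : (ℕ → ℕ) → α × ℕ → β} (hψ : TTFunctional ψ) :
    ∃ φ : (ℕ → ℕ) → α × ℕ → β, TTFunctional φ ∧ ∀ m a H c, H.Infinite →
      HasColor (r + m) (fun s => φ X (a, finsetCode s)) H c →
        HasColor m (fun s => ψ D (a, finsetCode s)) H c := by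
  induction hD generalizing ψ with
  | zero => exact ⟨ψ, hψ, fun m a H c _ h => by rwa [zero_add] at h⟩
  | @succ r E D _ hlim ih =>
    obtain ⟨L, hL, hlim⟩ := hlim
    let stage (p : α × ℕ) : ℕ := Nat.log 2 p.2
    have hstage : Primrec stage := primrec_log_two.comp .snd
    let ψ' (O : ℕ → ℕ) (p : α × ℕ) : β := ψ (fun m => L O (stage p, m)) (p.1, p.2 - 2 ^ stage p)
    have hψ' : TTFunctional ψ' :=
      (hψ.precomp (.pair .fst (Primrec.nat_sub.comp .snd (primrec_two_pow.comp hstage)))).subst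
        (hL.precomp (.pair (hstage.comp .fst) .snd))
    obtain ⟨φ, hφ, hcol⟩ := ih hψ'
    refine ⟨φ, hφ, fun m a H c hH h s hs hm => ?_⟩
    rw [add_right_comm, add_assoc] at h
    obtain ⟨t, htH, hψt, hst⟩ := ((Nat.frequently_atTop_iff_infinite.2 hH).and_eventually
      ((hψ.eventually_eq hlim (a, finsetCode s)).and
        (s.eventually_all.2 fun i _ => eventually_gt_atTop i))).exists
    have hts : t ∉ s := fun hts => (hst t hts).false
    have hcolor := hcol (m + 1) a H c hH h (insert t s)
      (by simpa [Set.insert_subset_iff] using ⟨htH, hs⟩)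
      (by rw [Finset.card_insert_of_notMem hts, hm])
    simpa [ψ', stage, finsetCode_insert hts, log_finsetCode_add hst, hψt] using hcolor

open scoped Classical in
theorem IteratedLimit.exists_coloring_of_eventually_iff {n : ℕ} (hD : IteratedLimit X (n + 1) D)
    (α : Type*) [Primcodable α] :
    ∃ E : ℕ → ℕ → ℕ, (∀ m, ∀ᶠ t in atTop, E t m = D m) ∧
      ∀ S : (ℕ → ℕ) → α × ℕ → Prop, TTPred S →
        ∃ φ : (ℕ → ℕ) → α × ℕ → Fin 2, TTFunctional φ ∧ ∀ a H c, H.Infinite →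
          HasColor (n + 1) (fun s => φ X (a, finsetCode s)) H c →
            ∀ p : Prop, (∀ᶠ t in atTop, (S (E t) (a, t) ↔ p)) → c = if p then 1 else 0 := by
  obtain _ | @⟨_, E, _, hE, L, hL, hlim⟩ := hD
  refine ⟨fun t m => L E (t, m), hlim, fun S hS => ?_⟩
  let ψ (O : ℕ → ℕ) (p : α × ℕ) : Fin 2 :=
    if S (fun m => L O (Nat.log 2 p.2, m)) (p.1, Nat.log 2 p.2) then 1 else 0
  have hlog : Primrec fun p : α × ℕ => Nat.log 2 p.2 := primrec_log_two.comp .snd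
  have hψ : TTFunctional ψ :=
    ((hS.precomp (.pair .fst hlog)).subst (hL.precomp (.pair (hlog.comp .fst) .snd))).ite
      (.of_primrec (.const 1)) (.of_primrec (.const 0))
  obtain ⟨φ, hφ, hcol⟩ := hE.exists_hasColor_imp hψ
  refine ⟨φ, hφ, fun a H c hH h p hp => ?_⟩
  obtain ⟨t, (htH : t ∈ H), ht⟩ :=
    ((Nat.frequently_atTop_iff_infinite.2 hH).and_eventually hp).exists
  have hcolor := hcol 1 a H c hH h {t} (by simpa using htH) (Finset.card_singleton t)
  simpa [ψ, finsetCode_singleton, Nat.log_pow, ht] using hcolor.symm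

/-- The coloring asks which of the two `Σ₁` events is witnessed first at the current stage of the
limit. -/
theorem IteratedLimit.exists_separating_coloring {n : ℕ} (hD : IteratedLimit X (n + 1) D)
    {P Q : (ℕ → ℕ) → α × ℕ → Prop} (hP : TTPred P) (hQ : TTPred Q) :
    ∃ φ : (ℕ → ℕ) → α × ℕ → Fin 2, TTFunctional φ ∧ ∀ a H c, H.Infinite →
      HasColor (n + 1) (fun s => φ X (a, finsetCode s)) H c →
        ((∃ l, P D (a, l)) → (∀ l, ¬Q D (a, l)) → c = 1) ∧
        ((∃ l, Q D (a, l)) → (∀ l, ¬P D (a, l)) → c = 0) := by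
  obtain ⟨E, hlim, hE⟩ := hD.exists_coloring_of_eventually_iff α
  have hnotQ : TTPred fun O (p : (α × ℕ) × ℕ) => ∀ l' < p.2 + 1, ¬Q O (p.1.1, l') :=
    (hQ.not.precomp (g := fun q : ((α × ℕ) × ℕ) × ℕ => (q.1.1.1, q.2))
      (.pair (Primrec.fst.comp (Primrec.fst.comp .fst)) .snd)).forall_lt (Primrec.succ.comp .snd)
  obtain ⟨φ, hφ, hcolor⟩ := hE (fun O p => ∃ l < p.2, P O (p.1, l) ∧ ∀ l' < l + 1, ¬Q O (p.1, l'))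
    (((hP.precomp (.pair (Primrec.fst.comp .fst) .snd)).and hnotQ).exists_lt .snd)
  refine ⟨φ, hφ, fun a H c hH h => ⟨?_, ?_⟩⟩
  · rintro ⟨l, hl⟩ hno
    refine (hcolor a H c hH h True ?_).trans (if_pos trivial)
    filter_upwards [eventually_gt_atTop l, hP.eventually_iff hlim (a, l),
      (Finset.range (l + 1)).eventually_all.2 fun i _ => hQ.eventually_iff hlim (a, i)]
      with t hlt hPt hQt
    exact iff_true_intro ⟨l, hlt, hPt.2 hl,
      fun i hi hQi => hno i ((hQt i (Finset.mem_range.2 hi)).1 hQi)⟩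
  · rintro ⟨l, hl⟩ hno
    refine (hcolor a H c hH h False ?_).trans (if_neg id)
    filter_upwards [hQ.eventually_iff hlim (a, l),
      (Finset.range l).eventually_all.2 fun i _ => hP.eventually_iff hlim (a, i)] with t hQt hPt
    refine iff_false_intro fun ⟨i, _, hPi, hnQ⟩ => ?_
    rcases lt_or_ge i l with hil | hli
    · exact hno i ((hPt i (Finset.mem_range.2 hil)).1 hPi)
    · exact hnQ l (Nat.lt_succ_of_le hli) (hQt.2 hl)

/-- The last good letter has color `0`, and every earlier letter of color `0` is good. -/
theorem exists_find?_of_separating {M : ℕ} {good : ℕ → Prop} {col : ℕ → Fin 2}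
    (hgood : ∃ a < M, good a) (h0 : ∀ a, col a = 0 → (∃ b < M, a < b ∧ good b) → good a)
    (h1 : ∀ a, good a → (∀ b < M, a < b → ¬good b) → col a = 0) :
    ∃ a, (List.range M).find? (fun a => decide (col a = 0)) = some a ∧ good a := by
  classical
  obtain ⟨b, ⟨hbM, hb⟩, hmax⟩ : ∃ b, (b < M ∧ good b) ∧ ∀ a, a < M ∧ good a → a ≤ b := by
    simpa using ((Finset.range M).filter good).exists_max_image id
      (hgood.imp fun a ha => by simpa using ha)
  have hb0 : col b = 0 := h1 b hb fun a ha hba hga => (hmax a ⟨ha, hga⟩).not_gt hba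
  have hex : ∃ a, col a = 0 := ⟨b, hb0⟩
  have hle : Nat.find hex ≤ b := Nat.find_min' hex hb0
  refine ⟨Nat.find hex, ?_, ?_⟩
  · rw [List.find?_range_eq_some]
    exact ⟨by simpa using Nat.find_spec hex, List.mem_range.2 (hle.trans_lt hbM),
      fun j hj => by simpa using Nat.find_min hex hj⟩
  · rcases hle.eq_or_lt with heq | hlt
    · rwa [heq]
    · exact h0 _ (Nat.find_spec hex) ⟨b, hbM, hlt, hb⟩

/-- The rule that extends `w` by the first letter `a < M` for which the pair `(w, a)` has color `0`,
and by `0` if there is none. -/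
def nextLetter (M : ℕ) (col : ℕ → ℕ) (w : List ℕ) : ℕ :=
  ((List.range M).find? fun a => decide (col (Encodable.encode (w, a)) = 0)).getD 0

theorem RecIn.of_forall_eq_nextLetter {O col y : ℕ → ℕ} {M : ℕ} (hcol : RecIn O col)
    (hy : ∀ m, y m = nextLetter M col (initSeg y m)) : RecIn O y := by
  classical
  let word : ℕ → List ℕ := Denumerable.ofNat (List ℕ)
  have hzero : TTPred fun O (p : ℕ × ℕ) => O (Encodable.encode (word p.1, p.2)) = 0 :=
    .eq (.query (Primrec.encode.comp (((Primrec.ofNat _).comp .fst).pair .snd)))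
      (.of_primrec (.const 0))
  have hnext : TTFunctional fun O p => nextLetter M O (word p) :=
    (TTFunctional.comp₂ Primrec.option_getD (hzero.list_find? (.const (List.range M)))
      (.of_primrec (.const 0))).of_eq fun O p => by simp only [nextLetter]; congr!
  have hseg := (hnext.recIn hcol).encode_initSeg_of_next (y := y) fun t => by simp [word, ← hy]
  exact ((hnext.recIn hcol).comp hseg).of_eq fun t => by simp [word, ← hy]

/-- The coloring at `(w, a)` separates non-extendibility of `w ++ [a]` (color `1`) from
non-extendibility of all `w ++ [b]` with `b > a` (color `0`). -/
theorem IteratedLimit.exists_coloring_extendible {n M : ℕ} (hD : IteratedLimit X (n + 1) D)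
    {T : (ℕ → ℕ) → List ℕ → Prop} (hT : TTPred T) (hTD : IsInfiniteTree M (T D)) :
    ∃ φ : (ℕ → ℕ) → (List ℕ × ℕ) × ℕ → Fin 2, TTFunctional φ ∧
      ∀ (w : List ℕ) (H : ℕ → Set ℕ) (c : ℕ → Fin 2), (∀ a, (H a).Infinite) →
        (∀ a, HasColor (n + 1) (fun s => φ X ((w, a), finsetCode s)) (H a) (c a)) →
          Extendible M (T D) w →
            ∃ a, (List.range M).find? (fun a => decide (c a = 0)) = some a ∧
              Extendible M (T D) (w ++ [a]) := by
  have hdead : TTPred fun O (p : (List ℕ × ℕ) × ℕ) =>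
      ¬HasExtension M (T O) (p.1.1 ++ [p.1.2]) p.2 :=
    ((hT.hasExtension M).precomp (.pair (Primrec.list_concat.comp
      (Primrec.fst.comp .fst) (Primrec.snd.comp .fst)) .snd)).not
  have hlast : TTPred fun O (p : (List ℕ × ℕ) × ℕ) =>
      ∀ b < M, p.1.2 < b → ¬HasExtension M (T O) (p.1.1 ++ [b]) p.2 :=
    ((TTPred.of_primrecPred (Primrec.nat_lt.comp
      (Primrec.snd.comp (Primrec.fst.comp .fst)) .snd)).imp
      (hdead.precomp (g := fun q : ((List ℕ × ℕ) × ℕ) × ℕ => ((q.1.1.1, q.2), q.1.2))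
        (.pair (.pair (Primrec.fst.comp (Primrec.fst.comp .fst)) .snd)
          (Primrec.snd.comp .fst)))).forall_lt (.const M)
  obtain ⟨φ, hφ, hsep⟩ := hD.exists_separating_coloring hdead hlast
  refine ⟨φ, hφ, fun w H c hH hc hw => ?_⟩
  have hsep (a : ℕ) := hsep (w, a) (H a) (c a) (hH a) (hc a)
  refine exists_find?_of_separating (hw.exists_append_singleton hTD)
    (fun a ha ⟨b, hbM, hab, hb⟩ => ?_) fun a ha hlater => ?_
  · by_contra hna
    have ha1 : c a = 1 := (hsep a).1 (not_forall.1 hna) fun l hl => hl b hbM hab (hb l)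
    simp [ha1] at ha
  · obtain ⟨l, hl⟩ := ((Finset.range M).eventually_all.2 fun b _ =>
      eventually_hasExtension_iff hTD (w ++ [b])).exists
    exact (hsep a).2 ⟨l, fun b hbM hab hb =>
      hlater b hbM hab ((hl b (Finset.mem_range.2 hbM)).1 hb)⟩ fun l hl => hl (ha l)

/-- Weak Kőnig's lemma relative to an `(n + 1)`-fold limit. -/
theorem IteratedLimit.exists_coloring_path {n M : ℕ} (hD : IteratedLimit X (n + 1) D)
    {T : (ℕ → ℕ) → List ℕ → Prop} (hT : TTPred T) (hTD : IsInfiniteTree M (T D)) :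
    ∃ φ : (ℕ → ℕ) → ℕ × ℕ → Fin 2, TTFunctional φ ∧
      ∀ (H : ℕ → Set ℕ) (c : ℕ → Fin 2), (∀ i, (H i).Infinite) →
        (∀ i, HasColor (n + 1) (fun s => φ X (i, finsetCode s)) (H i) (c i)) →
          ∃ y : ℕ → ℕ, (∀ m, T D (initSeg y m)) ∧ RecIn (fun i => c i) y := by
  obtain ⟨φ, hφ, hchild⟩ := hD.exists_coloring_extendible hT hTD
  refine ⟨fun O p => φ O (Denumerable.ofNat _ p.1, p.2),
    hφ.precomp (((Primrec.ofNat _).comp .fst).pair .snd), fun H c hH hc => ?_⟩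
  obtain ⟨y, hy⟩ := exists_forall_eq_initSeg (nextLetter M fun i => c i)
  refine ⟨y, fun m => Extendible.mem (M := M) ?_, (RecIn.oracle _).of_forall_eq_nextLetter hy⟩
  induction m with
  | zero => simpa [initSeg, Extendible, HasExtension] using hTD.exists_mem
  | succ m ih =>
    obtain ⟨a, hfind, ha⟩ := hchild (initSeg y m) _
      (fun a => c (Encodable.encode (initSeg y m, a))) (fun _ => hH _)
      (fun a => by
        simpa only [Denumerable.ofNat_encode] using hc (Encodable.encode (initSeg y m, a))) ih
    have hya : y m = a := by
      rw [hy, nextLetter]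
      simp only [Fin.val_eq_zero_iff, hfind, Option.getD_some]
    rwa [initSeg_succ, hya]

end Colorings

section Types

/-- A `q`-type over `X`, where `X c < K` is the color of the finite set coded by `c`. The base-`K`
digits of `V c`, from the leading one down, are `X c`, a limit of `X (c + 2 ^ x)` in `x`, an
iterated limit of `X (c + 2 ^ x + 2 ^ y)` in `y` and `x`, and so on; all these limits are taken
along the stages provided by `exists_stage`. -/
structure IsCoherentType (K q : ℕ) (X V : ℕ → ℕ) : Prop where
  lt_pow : ∀ c, V c < K ^ (q + 1)
  exists_stage : ∀ C, ∃ x ≥ C, ∀ c < C, V c % K ^ q = V (c + 2 ^ x) / K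
  div_pow_eq : ∀ c, V c / K ^ q = X c

theorem IsCoherentType.exists_extension {K q : ℕ} {X V : ℕ → ℕ} (hK : 0 < K)
    (hV : IsCoherentType K q X V) (t : ℕ) :
    ∃ (W : ℕ → ℕ) (x : ℕ), t ≤ x ∧ (∀ c, W c / K = V c) ∧
      ∀ c < t, W c % K ^ (q + 1) = V (c + 2 ^ x) := by
  obtain ⟨x, htx, hx⟩ := hV.exists_stage t
  have hdiv (c : ℕ) : (K * V c + V (c + 2 ^ x) % K) / K = V c := by
    rw [Nat.mul_add_div hK, Nat.div_eq_of_lt (Nat.mod_lt _ hK), add_zero]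
  refine ⟨fun c => K * V c + V (c + 2 ^ x) % K, x, htx, hdiv, fun c hc => ?_⟩
  rw [pow_succ', Nat.mod_mul, hdiv, hx c hc, Nat.mul_add_mod, Nat.mod_mod, Nat.mod_add_div]

/-- The letters of `σ`, reduced modulo `κ`, are the values of `V` at the sets enlarged by `x`. -/
def Realizes (κ : ℕ) (V : ℕ → ℕ) (σ : List ℕ) (x : ℕ) : Prop :=
  σ.length ≤ x ∧ ∀ c < σ.length, σ.getD c 0 % κ = V (c + 2 ^ x)

/-- An oracle whose halves form a `q`-type and whose parities tell which strings are realized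
in it. -/
structure IsLevelOracle (K q : ℕ) (X D : ℕ → ℕ) : Prop where
  isCoherentType : IsCoherentType K q X (D · / 2)
  mod_two_eq_one_iff : ∀ σ : List ℕ,
    D (Encodable.encode σ) % 2 = 1 ↔ ∃ x, Realizes (K ^ (q + 1)) (D · / 2) σ x

/-- The string `u`, an initial segment of a type, shows that the string `σ` is realized. -/
def ShowsRealized (κ : ℕ) (σ u : List ℕ) : Prop :=
  ∃ x < u.length, σ.length ≤ x ∧ ∀ c < σ.length, u[c + 2 ^ x]? = some (σ.getD c 0 % κ)

theorem ShowsRealized.mono {κ : ℕ} {σ u v : List ℕ} (huv : u <+: v) (h : ShowsRealized κ σ u) :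
    ShowsRealized κ σ v := by
  obtain ⟨x, hx, hσx, hu⟩ := h
  refine ⟨x, hx.trans_le huv.length_le, hσx, fun c hc => ?_⟩
  obtain ⟨w, rfl⟩ := huv
  rw [List.getElem?_append_left (List.getElem?_eq_some_iff.1 (hu c hc)).1, hu c hc]

theorem exists_showsRealized_initSeg_iff {κ : ℕ} {σ : List ℕ} {V : ℕ → ℕ} :
    (∃ m, ShowsRealized κ σ (initSeg V m)) ↔ ∃ x, Realizes κ V σ x := by
  constructor
  · rintro ⟨m, x, -, hσx, hV⟩
    refine ⟨x, hσx, fun c hc => ?_⟩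
    obtain ⟨hcm, hVc⟩ := List.getElem?_eq_some_iff.1 (hV c hc)
    simpa using hVc.symm
  · rintro ⟨x, hσx, hV⟩
    refine ⟨σ.length + 2 ^ x, x, ?_, hσx, fun c hc => ?_⟩
    · simpa using Nat.lt_two_pow_self.trans_le (Nat.le_add_left _ _)
    · rw [hV c hc]
      simp [hc]

theorem primrecRel_showsRealized (κ : ℕ) :
    PrimrecRel fun e u => ShowsRealized κ (Denumerable.ofNat (List ℕ) e) u := by
  let word : ℕ → List ℕ := Denumerable.ofNat (List ℕ)
  have hword {γ : Type} [Primcodable γ] {e : γ → ℕ} (he : Primrec e) :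
      Primrec fun a => word (e a) := (Primrec.ofNat _).comp he
  have hletter : PrimrecRel fun (c : ℕ) (p : ℕ × ℕ × List ℕ) =>
      p.2.2[c + 2 ^ p.1]? = some ((word p.2.1).getD c 0 % κ) :=
    Primrec.eq.comp
      (Primrec.list_getElem?.comp (Primrec.snd.comp (Primrec.snd.comp .snd))
        (Primrec.nat_add.comp .fst (primrec_two_pow.comp (Primrec.fst.comp .snd))))
      (Primrec.option_some.comp (Primrec.nat_mod.comp
        ((Primrec.list_getD 0).comp (hword (Primrec.fst.comp (Primrec.snd.comp .snd))) .fst)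
        (.const κ)))
  have hlength : Primrec fun p : ℕ × List ℕ => (word p.1).length :=
    Primrec.list_length.comp (hword .fst)
  have hletters := hletter.forall_mem_list.comp (Primrec.list_range.comp (hlength.comp .snd))
    (Primrec.id (α := ℕ × ℕ × List ℕ))
  have hbody : PrimrecRel fun (x : ℕ) (p : ℕ × List ℕ) => (word p.1).length ≤ x ∧
      ∀ c ∈ List.range (word p.1).length, p.2[c + 2 ^ x]? = some ((word p.1).getD c 0 % κ) :=
    (Primrec.nat_le.comp (hlength.comp .snd) .fst).and hletters
  exact (hbody.exists_mem_list.comp (Primrec.list_range.comp (Primrec.list_length.comp .snd))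
    Primrec.id).of_eq fun p => by simp only [ShowsRealized, List.mem_range]; rfl

theorem exists_isLevelOracle_of_tree {T : (ℕ → ℕ) → List ℕ → Prop} (hT : TTPred T) {M : ℕ}
    {K q : ℕ} {X E : ℕ → ℕ} (hE : IsInfiniteTree M (T E))
    (hpath : ∀ V, (∀ m, T E (initSeg V m)) → IsCoherentType K q X V) :
    ∃ D, LimitComputable E D ∧ IsLevelOracle K q X D := by
  obtain ⟨D, hlim, hD, hodd⟩ := exists_low_path hT hE (primrecRel_showsRealized (K ^ (q + 1)))
    fun _ _ _ => ShowsRealized.mono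
  refine ⟨D, hlim, hpath _ hD, fun σ => ?_⟩
  rw [hodd, Denumerable.ofNat_encode, exists_showsRealized_initSeg_iff]

/-- The strings that prolong each value of the type given by the level oracle `D` by one more
digit and that are realized. -/
def extensionTree (K : ℕ) (D : ℕ → ℕ) (σ : List ℕ) : Prop :=
  D (Encodable.encode σ) % 2 = 1 ∧ ∀ c < σ.length, σ.getD c 0 / K = D c / 2

theorem ttPred_extensionTree (K : ℕ) : TTPred (extensionTree K) := by
  have hrealized : TTPred fun D (σ : List ℕ) => D (Encodable.encode σ) % 2 = 1 :=
    .eq (.comp₂ Primrec.nat_mod (.query Primrec.encode) (.of_primrec (.const 2)))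
      (.of_primrec (.const 1))
  have hdigit : TTPred fun D (p : List ℕ × ℕ) => p.1.getD p.2 0 / K = D p.2 / 2 :=
    .eq (.of_primrec (Primrec.nat_div.comp (Primrec.list_getD 0) (.const K)))
      (.comp Primrec.nat_div2 (.query .snd))
  exact hrealized.and (hdigit.forall_lt Primrec.list_length)

theorem IsLevelOracle.isCoherentType_of_path {K q : ℕ} {X D W : ℕ → ℕ} (hK : 0 < K)
    (hD : IsLevelOracle K q X D) (hW : ∀ m, extensionTree K D (initSeg W m)) :
    IsCoherentType K (q + 1) X W := by
  have hdiv (c : ℕ) : W c / K = D c / 2 := by simpa using (hW (c + 1)).2 c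
  refine ⟨fun c => ?_, fun C => ?_, fun c => ?_⟩
  · rw [pow_succ, ← Nat.div_lt_iff_lt_mul hK, hdiv]
    exact hD.isCoherentType.lt_pow c
  · obtain ⟨x, hCx, hx⟩ := (hD.mod_two_eq_one_iff _).1 (hW C).1
    refine ⟨x, by simpa using hCx, fun c hc => ?_⟩
    rw [hdiv]
    simpa [hc] using hx c (by simpa using hc)
  · rw [pow_succ', ← Nat.div_div_eq_div_mul, hdiv, hD.isCoherentType.div_pow_eq]

theorem IsLevelOracle.isInfiniteTree_extensionTree {K q : ℕ} {X D : ℕ → ℕ} (hK : 0 < K)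
    (hD : IsLevelOracle K q X D) : IsInfiniteTree (K ^ (q + 2)) (extensionTree K D) where
  of_prefix u v huv hv := by
    obtain ⟨x, hvx, hx⟩ := (hD.mod_two_eq_one_iff v).1 hv.1
    obtain ⟨w, rfl⟩ := huv
    have hlt {c : ℕ} (hc : c < u.length) : c < (u ++ w).length :=
      hc.trans_le (List.prefix_append u w).length_le
    refine ⟨(hD.mod_two_eq_one_iff u).2 ⟨x, ?_, fun c hc => ?_⟩, fun c hc => ?_⟩
    · exact (List.prefix_append u w).length_le.trans hvx
    · rw [← List.getD_append u w 0 c hc, hx c (hlt hc)]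
    · rw [← List.getD_append u w 0 c hc, hv.2 c (hlt hc)]
  exists_mem t := by
    obtain ⟨W, x, htx, hdiv, hmod⟩ := hD.isCoherentType.exists_extension hK t
    refine ⟨initSeg W t, mem_strings.2 ⟨by simp, fun a ha => ?_⟩,
      (hD.mod_two_eq_one_iff _).2 ⟨x, by simpa using htx, fun c hc => ?_⟩, fun c hc => ?_⟩
    · obtain ⟨c, -, rfl⟩ := List.mem_map.1 ha
      rw [pow_succ, ← Nat.div_lt_iff_lt_mul hK, hdiv]
      exact hD.isCoherentType.lt_pow c
    · have hc : c < t := by simpa using hc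
      simpa [hc] using hmod c hc
    · have hc : c < t := by simpa using hc
      simpa [hc] using hdiv c

/-- The strings that are initial segments of the oracle. -/
def oracleTree (O : ℕ → ℕ) (σ : List ℕ) : Prop := ∀ c < σ.length, σ.getD c 0 = O c

theorem ttPred_oracleTree : TTPred oracleTree :=
  (TTPred.eq (.of_primrec ((Primrec.list_getD 0).comp .fst .snd)) (.query .snd)).forall_lt
    Primrec.list_length

theorem isInfiniteTree_oracleTree {K : ℕ} {X : ℕ → ℕ} (hX : ∀ c, X c < K) :
    IsInfiniteTree K (oracleTree X) where
  of_prefix u v huv hv c hc := by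
    rw [← hv c (hc.trans_le huv.length_le)]
    obtain ⟨w, rfl⟩ := huv
    exact (List.getD_append u w 0 c hc).symm
  exists_mem t := ⟨initSeg X t, mem_strings.2 ⟨by simp, by simp [hX]⟩, fun c hc => by
    have hc : c < t := by simpa using hc
    simp [hc]⟩

theorem isCoherentType_zero {K : ℕ} {X : ℕ → ℕ} (hX : ∀ c, X c < K) : IsCoherentType K 0 X X where
  lt_pow c := by simpa using hX c
  exists_stage C := ⟨C, le_rfl, fun c _ => by simp [Nat.mod_one, Nat.div_eq_of_lt (hX _)]⟩
  div_pow_eq c := by simp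

theorem exists_isLevelOracle {K : ℕ} {X : ℕ → ℕ} (hX : ∀ c, X c < K) (q : ℕ) :
    ∃ D, IteratedLimit X (q + 1) D ∧ IsLevelOracle K q X D := by
  have hK : 0 < K := Nat.zero_lt_of_lt (hX 0)
  induction q with
  | zero =>
    obtain ⟨D, hlim, hD⟩ := exists_isLevelOracle_of_tree ttPred_oracleTree
      (isInfiniteTree_oracleTree hX) fun V hV => by
        obtain rfl : V = X := funext fun c => by simpa using hV (c + 1) c
        exact isCoherentType_zero hX
    exact ⟨D, .succ .zero hlim, hD⟩
  | succ q ih =>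
    obtain ⟨E, hE, hEq⟩ := ih
    obtain ⟨D, hlim, hD⟩ := exists_isLevelOracle_of_tree (ttPred_extensionTree K)
      (hEq.isInfiniteTree_extensionTree hK) fun _ => hEq.isCoherentType_of_path hK
    exact ⟨D, .succ hE hlim, hD⟩

theorem exists_coloring_isCoherentType {K : ℕ} {X : ℕ → ℕ} (hX : ∀ c, X c < K) (n : ℕ) :
    ∃ φ : (ℕ → ℕ) → ℕ × ℕ → Fin 2, TTFunctional φ ∧
      ∀ (H : ℕ → Set ℕ) (c : ℕ → Fin 2), (∀ i, (H i).Infinite) →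
        (∀ i, HasColor (n + 1) (fun s => φ X (i, finsetCode s)) (H i) (c i)) →
          ∃ V : ℕ → ℕ, IsCoherentType K (n + 1) X V ∧ RecIn (fun i => c i) V := by
  have hK : 0 < K := Nat.zero_lt_of_lt (hX 0)
  obtain ⟨D, hlim, hD⟩ := exists_isLevelOracle hX n
  obtain ⟨φ, hφ, hpath⟩ :=
    hlim.exists_coloring_path (ttPred_extensionTree K) (hD.isInfiniteTree_extensionTree hK)
  refine ⟨φ, hφ, fun H c hH hc => ?_⟩
  obtain ⟨V, hV, hrec⟩ := hpath H c hH hc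
  exact ⟨V, hD.isCoherentType_of_path hK hV, hrec⟩

end Types

section Greedy

theorem recIn_chi_range {f : ℕ → ℕ} (hf : StrictMono f) : RecIn f (chi (Set.range f)) := by
  classical
  have hmem : TTPred fun O (x : ℕ) => ∃ n < x + 1, O n = x :=
    (TTPred.eq (.query .snd) (.of_primrec .fst)).exists_lt .succ
  refine ((hmem.ite (.of_primrec (.const 1)) (.of_primrec (.const 0))).recIn (.oracle f)).of_eq
    fun x => ?_
  have hiff : (∃ n < x + 1, f n = x) ↔ x ∈ Set.range f :=
    ⟨fun ⟨n, _, hn⟩ => ⟨n, hn⟩, fun ⟨n, hn⟩ => ⟨n, Nat.lt_succ_of_le (hn ▸ hf.le_apply), hn⟩⟩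
  simp only [hiff, chi, Set.indicator_apply]

theorem TTPred.exists_greedy_set {P : (ℕ → ℕ) → ℕ × ℕ → Prop} (hP : TTPred P) {O : ℕ → ℕ}
    (hex : ∀ b, ∃ x ≥ b, P O (b, x)) :
    ∃ S : Set ℕ, S.Infinite ∧ RecIn O (chi S) ∧
      ∀ x ∈ S, ∃ b, (∀ i ∈ S, i < x → i < b) ∧ P O (b, x) := by
  obtain ⟨next, hrec, hnext⟩ :=
    ((TTPred.of_primrecPred Primrec.nat_le).and hP).exists_recIn_choice hex
  let bound (m : ℕ) : ℕ := Nat.rec 0 (fun _ b => next b + 1) m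
  have hbound : RecIn O bound :=
    ((RecIn.of_primrec .succ).comp (hrec.comp (.of_primrec (Primrec.snd.comp .unpair)))).nat_rec 0
      |>.of_eq fun m => by simp [bound]
  have hbound_mono : Monotone bound := monotone_nat_of_le_succ fun m =>
    (hnext (bound m)).1.trans (Nat.le_succ _)
  have hlt {i m : ℕ} (him : i < m) : next (bound i) < bound m := hbound_mono him
  have hmono : StrictMono fun m => next (bound m) := fun i m him =>
    (hlt him).trans_le (hnext (bound m)).1
  refine ⟨Set.range fun m => next (bound m), Set.infinite_range_of_injective hmono.injective,
    (recIn_chi_range hmono).trans (hrec.comp hbound), ?_⟩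
  rintro _ ⟨m, rfl⟩
  refine ⟨bound m, ?_, (hnext _).2⟩
  rintro _ ⟨i, rfl⟩ him
  exact hlt (hmono.lt_iff_lt.1 him)

variable {K n : ℕ} {X V : ℕ → ℕ}

theorem IsCoherentType.exists_greedy_set (hV : IsCoherentType K n X V) :
    ∃ (S : Set ℕ) (r : ℕ), S.Infinite ∧ RecIn V (chi S) ∧ ∀ x ∈ S, V (2 ^ x) % K = r ∧
      ∀ s : Finset ℕ, ↑s ⊆ S → (∀ i ∈ s, i < x) →
        V (finsetCode s) % K ^ n = V (finsetCode s + 2 ^ x) / K := by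
  have hK : 0 < K := Nat.pos_of_ne_zero fun h => by simpa [h] using hV.lt_pow 0
  obtain ⟨r, hr⟩ : ∃ r, ∀ C, ∃ x ≥ C, (∀ c < C, V c % K ^ n = V (c + 2 ^ x) / K) ∧
      V (2 ^ x) % K = r := by
    by_contra! hno
    choose C hC using hno
    obtain ⟨x, hCx, hx⟩ := hV.exists_stage ((Finset.range K).sup C)
    have hle : C (V (2 ^ x) % K) ≤ (Finset.range K).sup C :=
      Finset.le_sup (Finset.mem_range.2 (Nat.mod_lt _ hK))
    exact hC _ x (hle.trans hCx) (fun c hc => hx c (hc.trans_le hle)) rfl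
  have hcode : Primrec fun p : ℕ × ℕ => 2 ^ p.2 := primrec_two_pow.comp .snd
  have hdigits : TTPred fun O (a : (ℕ × ℕ) × ℕ) => O a.2 % K ^ n = O (a.2 + 2 ^ a.1.2) / K :=
    .eq (.comp₂ Primrec.nat_mod (.query .snd) (.of_primrec (.const _)))
      (.comp₂ Primrec.nat_div (.query (Primrec.nat_add.comp .snd (hcode.comp .fst)))
        (.of_primrec (.const _)))
  have hdigit : TTPred fun O (p : ℕ × ℕ) => O (2 ^ p.2) % K = r :=
    .eq (.comp₂ Primrec.nat_mod (.query hcode) (.of_primrec (.const _))) (.of_primrec (.const _))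
  obtain ⟨S, hS, hrec, hgreedy⟩ :=
    ((hdigits.forall_lt (primrec_two_pow.comp .fst)).and hdigit).exists_greedy_set fun b =>
      (hr (2 ^ b)).imp fun x hx => ⟨Nat.lt_two_pow_self.le.trans hx.1, hx.2⟩
  refine ⟨S, r, hS, hrec, fun x hx => ?_⟩
  obtain ⟨b, hlt, hb⟩ := hgreedy x hx
  exact ⟨hb.2, fun s hs hsx => hb.1 _ (finsetCode_lt fun i hi => hlt i (hs hi) (hsx i hi))⟩

theorem IsCoherentType.exists_hasColor (hV : IsCoherentType K n X V) :
    ∃ (S : Set ℕ) (r : ℕ), S.Infinite ∧ RecIn V (chi S) ∧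
      HasColor (n + 1) (fun s => X (finsetCode s)) S r := by
  obtain ⟨S, r, hS, hrec, hstage⟩ := hV.exists_greedy_set
  have hdigit (j : ℕ) (hj : j ≤ n) :
      HasColor (j + 1) (fun s => V (finsetCode s) / K ^ j % K) S r := by
    induction j with
    | zero =>
      intro s hs hcard
      obtain ⟨x, rfl⟩ := Finset.card_eq_one.1 hcard
      simpa [finsetCode_singleton] using (hstage x (hs (by simp))).1
    | succ j ih =>
      intro s hs hcard
      obtain ⟨m, rfl⟩ := Nat.exists_eq_add_of_lt hj
      induction s using Finset.induction_on_max with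
      | empty => simp at hcard
      | insert x s hx _ =>
        have hxs : x ∉ s := fun h => (hx x h).false
        rw [Finset.card_insert_of_notMem hxs, Nat.add_right_cancel_iff] at hcard
        rw [Finset.coe_insert, Set.insert_subset_iff] at hs
        have hpow : K ^ (j + m + 1) = K ^ j * (K * K ^ m) := by ring
        calc V (finsetCode (insert x s)) / K ^ (j + 1) % K
            = V (finsetCode s) % K ^ (j + m + 1) / K ^ j % K := by
              rw [(hstage x hs.1).2 s hs.2 hx, finsetCode_insert hxs, pow_succ',
                Nat.div_div_eq_div_mul]
          _ = V (finsetCode s) / K ^ j % K := by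
              rw [hpow, Nat.mod_mul_right_div_self, Nat.mod_mul_right_mod]
          _ = r := ih (by omega) s hs.2 hcard
  refine ⟨S, r, hS, hrec, fun s hs hcard => ?_⟩
  have hX : X (finsetCode s) < K := by
    rw [← hV.div_pow_eq]
    exact Nat.div_lt_of_lt_mul (pow_succ K n ▸ hV.lt_pow _)
  calc X (finsetCode s) = V (finsetCode s) / K ^ n % K := by
        rw [hV.div_pow_eq, Nat.mod_eq_of_lt hX]
    _ = r := hdigit n le_rfl s hs hcard

end Greedy

section FinsetEncoding

theorem decode_multiset_encode_list (l : List ℕ) :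
    Encodable.decode (α := Multiset ℕ) (Encodable.encode l) = some (l : Multiset ℕ) := by
  change (_ : List ℕ → Multiset ℕ) <$> Encodable.decode (α := List ℕ) (Encodable.encode l) = _
  rw [Encodable.encodek, Option.map_eq_map, Option.map_some]

theorem decode_subtype {α : Type*} [Encodable α] {p : α → Prop} [DecidablePred p] (m : ℕ) :
    (Encodable.decode m : Option {a // p a}) =
      (Encodable.decode m).bind fun a => if h : p a then some ⟨a, h⟩ else none := rfl

theorem decode_finset_encode_list (l : List ℕ) :
    (Encodable.decode (α := Finset ℕ) (Encodable.encode l)).getD ∅ =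
      if l.Nodup then l.toFinset else ∅ := by
  simp only [Encodable.decode_ofEquiv, decode_subtype, decode_multiset_encode_list,
    Option.bind_some, Multiset.coe_nodup]
  split_ifs with h <;> ext <;> simp

theorem finsetCode_toFinset {l : List ℕ} (h : l.Nodup) :
    finsetCode l.toFinset = (l.map (2 ^ ·)).sum :=
  List.sum_toFinset _ h

theorem primrec_sum_map_two_pow : Primrec fun l : List ℕ => (l.map (2 ^ ·)).sum := by
  have hadd : Primrec₂ fun (_ : List ℕ) (p : ℕ × ℕ) => 2 ^ p.1 + p.2 :=
    Primrec.nat_add.comp (primrec_two_pow.comp (Primrec.fst.comp .snd)) (Primrec.snd.comp .snd)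
  exact (Primrec.list_foldr .id (.const 0) hadd).of_eq fun l => by simp [List.sum, List.foldr_map]

theorem primrecPred_nodup : PrimrecPred fun l : List ℕ => l.Nodup := by
  have hcount : PrimrecRel fun (x : ℕ) (l : List ℕ) => (l.filter (· = x)).length = 1 :=
    Primrec.eq.comp (Primrec.list_length.comp
      ((PrimrecRel.listFilter (R := fun y x : ℕ => y = x) Primrec.eq).comp .snd .fst)) (.const 1)
  exact (hcount.forall_mem_list.comp .id .id).of_eq fun l => by
    simp [List.nodup_iff_count_eq_one, List.count_eq_length_filter, beq_eq_decide]

theorem primrec_finsetCode_decode :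
    Primrec fun m => finsetCode ((Encodable.decode (α := Finset ℕ) m).getD ∅) := by
  classical
  have hlist : Primrec (Denumerable.ofNat (List ℕ)) := Primrec.ofNat _
  refine (Primrec.ite (primrecPred_nodup.comp hlist) (primrec_sum_map_two_pow.comp hlist)
    (.const 0)).of_eq fun m => ?_
  conv_rhs => rw [← Denumerable.encode_ofNat (α := List ℕ) m, decode_finset_encode_list]
  split_ifs with h
  · rw [finsetCode_toFinset h]
  · rfl

end FinsetEncoding

section Reduction

variable {k n : ℕ} {O : ℕ → ℕ}

/-- The coloring `f` as a function of binary codes. -/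
def codeColor (f : Finset ℕ → Fin k) (c : ℕ) : ℕ := f c.bitIndices.toFinset

theorem codeColor_finsetCode (f : Finset ℕ → Fin k) (s : Finset ℕ) :
    codeColor f (finsetCode s) = f s := by
  rw [codeColor, finsetCode, Finset.toFinset_bitIndices_sum_two_pow]

theorem recIn_codeColor (f : Finset ℕ → Fin k) : RecIn (colOracle k f) (codeColor f) := by
  have hcode : TTPred fun _ (p : ℕ × ℕ) =>
      finsetCode ((Encodable.decode (α := Finset ℕ) p.2).getD ∅) = p.1 :=
    .of_primrecPred (Primrec.eq.comp (primrec_finsetCode_decode.comp .snd) .fst)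
  obtain ⟨v, hv, hvc⟩ := hcode.exists_recIn_choice (O := colOracle k f) fun c =>
    ⟨Encodable.encode c.bitIndices.toFinset, by simp [finsetCode]⟩
  refine ((RecIn.oracle _).comp hv).of_eq fun c => ?_
  rw [colOracle, ← codeColor_finsetCode, hvc]

theorem exists_recIn_finsetCode (n : ℕ) {H : ℕ → Set ℕ} (hH : ∀ i, (H i).Infinite) :
    ∃ h, RecIn (seqOracle H) h ∧
      ∀ i, ∃ s : Finset ℕ, ↑s ⊆ H i ∧ s.card = n ∧ h i = finsetCode s := by
  let IsTuple (O : ℕ → ℕ) (p : ℕ × ℕ) : Prop :=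
    ((Denumerable.ofNat (List ℕ) p.2).Nodup ∧ (Denumerable.ofNat (List ℕ) p.2).length = n) ∧
      ∀ x ∈ Denumerable.ofNat (List ℕ) p.2, O (Nat.pair p.1 x) = 1
  have hlist : Primrec fun p : ℕ × ℕ => Denumerable.ofNat (List ℕ) p.2 :=
    (Primrec.ofNat _).comp .snd
  have htuple : TTPred IsTuple :=
    (TTPred.of_primrecPred ((primrecPred_nodup.comp hlist).and
      (Primrec.eq.comp (Primrec.list_length.comp hlist) (.const n)))).and
      ((TTPred.eq (.query (Primrec₂.natPair.comp (Primrec.fst.comp .fst) .snd))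
        (.of_primrec (.const 1))).forall_mem_list hlist)
  have hmem (i x : ℕ) : seqOracle H (Nat.pair i x) = 1 ↔ x ∈ H i := by
    simp [seqOracle, chi]
  obtain ⟨v, hv, hvt⟩ := htuple.exists_recIn_choice (O := seqOracle H) fun i => by
    obtain ⟨s, hs, hcard⟩ := (hH i).exists_subset_card_eq n
    refine ⟨Encodable.encode s.toList, ?_⟩
    simpa [IsTuple, s.nodup_toList, hcard, hmem, Set.subset_def] using hs
  refine ⟨_, (RecIn.of_primrec (primrec_sum_map_two_pow.comp (Primrec.ofNat _))).comp hv,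
    fun i => ⟨(Denumerable.ofNat (List ℕ) (v i)).toFinset, fun x hx => ?_, ?_, ?_⟩⟩
  · exact (hmem i x).1 ((hvt i).2 x (by simpa using hx))
  · rw [List.toFinset_card_of_nodup (hvt i).1.1, (hvt i).1.2]
  · rw [finsetCode_toFinset (hvt i).1.1]

theorem recIn_colors {H : ℕ → Set ℕ} {g : ℕ × ℕ → Fin k} {c : ℕ → Fin k}
    (hg : RecIn O fun p => g p.unpair) (hHO : RecIn O (seqOracle H)) (hH : ∀ i, (H i).Infinite)
    (hc : ∀ i, HasColor n (fun s => g (i, finsetCode s)) (H i) (c i)) :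
    RecIn O fun i => c i := by
  obtain ⟨h, hrec, hs⟩ := exists_recIn_finsetCode n hH
  refine (hg.comp ((RecIn.of_primrec .id).pair (hrec.trans hHO))).of_eq fun i => ?_
  obtain ⟨s, hsH, hcard, hhs⟩ := hs i
  simpa [hhs] using congrArg Fin.val (hc i s hsH hcard)

theorem HasColor.homog {f : Finset ℕ → Fin k} {H : Set ℕ} {r : ℕ} (hH : H.Infinite)
    (h : HasColor n (fun s => (f s : ℕ)) H r) : Homog n k f H := by
  obtain ⟨s, hs, hcard⟩ := hH.exists_subset_card_eq n
  exact ⟨f s, fun t ht htn => Fin.ext ((h t ht htn).trans (h s hs hcard).symm)⟩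

end Reduction

/-- `RT^{n+1}_k` is computably reducible to the parallelization of `RT^n_2`: from any
coloring `f` of `(n+1)`-sets with `k` colors one can `f`-computably produce a sequence
of 2-colorings of `n`-sets such that any sequence of infinite homogeneous sets for them,
joined with `f`, computes an infinite `f`-homogeneous set. -/
theorem rt_reducible_parallelization (n k : ℕ) (hn : 1 ≤ n) (hk : 1 ≤ k)
    (f : Finset ℕ → Fin k) :
    ∃ g : ℕ → Finset ℕ → Fin 2,
      (∃ h : ℕ → ℕ, RecIn (colOracle k f) h ∧
        ∀ i m : ℕ, h (Nat.pair i m) =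
          (g i ((Encodable.decode (α := Finset ℕ) m).getD ∅) : ℕ)) ∧
      ∀ H : ℕ → Set ℕ, (∀ i, (H i).Infinite) → (∀ i, Homog n 2 (g i) (H i)) →
        ∃ Hf : Set ℕ, Hf.Infinite ∧ Homog (n + 1) k f Hf ∧
          RecIn (joinF (colOracle k f) (seqOracle H)) (chi Hf) := by
  obtain ⟨q, rfl⟩ := Nat.exists_eq_add_of_le' hn
  obtain ⟨φ, hφ, htype⟩ := exists_coloring_isCoherentType (X := codeColor f) (fun _ => Fin.isLt _) q
  have hφX : RecIn (colOracle k f) fun p => φ (codeColor f) p.unpair :=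
    ((TTFunctional.comp .fin_val hφ).precomp .unpair).recIn (recIn_codeColor f)
  refine ⟨fun i s => φ (codeColor f) (i, finsetCode s), ⟨_, hφX.comp (.of_primrec
    (Primrec₂.natPair.comp (Primrec.fst.comp .unpair)
      (primrec_finsetCode_decode.comp (Primrec.snd.comp .unpair)))), by simp⟩, fun H hH hH' => ?_⟩
  choose c hc using hH'
  obtain ⟨V, hV, hcV⟩ := htype H c hH hc
  obtain ⟨S, r, hS, hVS, hr⟩ := hV.exists_hasColor
  have hc' : RecIn (joinF (colOracle k f) (seqOracle H)) fun i => c i :=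
    recIn_colors (hφX.trans (recIn_joinF_left _ _)) (recIn_joinF_right _ _) hH hc
  simp only [codeColor_finsetCode] at hr
  exact ⟨S, hS, hr.homog hS, hVS.trans (hcV.trans hc')⟩

end Paper
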